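/- arXiv:2410.16761 — 3 statements merged into one kernel-verified Lean document; each statement's English description precedes it below -/
import Mathlib

section
/- Let B be an abelian group with operators in a set A, let σ_A, δ_A : A → A be maps, and let σ_B, δ_B be additive endomorphisms of B. Suppose that σ_B is σ_A-twisted and that δ_B is a δ_A-twisted σ_A-derivation. Then for all a ∈ A, b ∈ B and i, m ∈ ℕ the Leibniz identity π_i^m(ab) = ∑_{k=0}^{m} ∑_{w ∈ W_{m,k}} w_A(a) · π_i^k(b) holds in B, where W_{m,k} is the set of words of length m in the two letters σ and δ containing exactly k occurrences of σ, and for such a word w, w_A(a) ∈ A is obtained by applying to a the corresponding composition of σ_A and δ_A. -/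
/-- `words m k` : the words of length `m` in the two letters `σ` (encoded `true`)
and `δ` (encoded `false`) containing exactly `k` occurrences of `σ`. -/
def words (m k : ℕ) : Finset (Fin m → Bool) :=
  Finset.univ.filter fun w => (Finset.univ.filter fun t => w t = true).card = k

/-- Apply a word in the letters `σ`, `δ` to `x`, i.e. the composition of the
corresponding maps applied to `x`. -/
def wordApply {X : Type*} (σ δ : X → X) {m : ℕ} (w : Fin m → Bool) (x : X) : X :=
  (List.ofFn fun t => if w t then σ else δ).foldr (fun f y => f y) x

/-- `piFun σ δ i j` is the map `π_j^i : B → B`, the sum of all `binom(i,j)`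
compositions of `j` instances of `σ` and `i - j` instances of `δ`
(in particular it is `0` for `j > i` and the identity for `i = j = 0`). -/
def piFun {B : Type*} [AddCommMonoid B] (σ δ : B → B) (i j : ℕ) (b : B) : B :=
  ∑ w ∈ words i j, wordApply σ δ w b

/-!
On polynomials with coefficients in `B`, the operator `D = σ X + δ` satisfies
`D^m = ∑ i, π_i^m X^i`, so the identity is the coefficient of `X^i` in
`D^m (a b) = ∑ w, w_A(a) · D^{|w|} b`, where `w` runs over the words of length `m` and `|w|` counts
the letters `σ` in `w`. The latter is a plain induction on `m` from the one-step rule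
`D (a b) = σ_A(a) · D b + δ_A(a) · b`, which absorbs both twisting hypotheses at once. The expansion
of `D^m` is itself an instance of that induction, with the monomials `b X^n` in the role of the
products `a b`.
-/

open Finset

section Words

/-- The number `|w|` of occurrences of the letter `σ` (encoded `true`) in the word `w`; the set
`words m k` is its fibre over `k`. -/
def sigmaCount {m : ℕ} (w : Fin m → Bool) : ℕ := #{t | w t = true}

variable {m : ℕ}

theorem mem_words {k : ℕ} {w : Fin m → Bool} : w ∈ words m k ↔ sigmaCount w = k := by
  simp [words, sigmaCount]

@[simp]
theorem sigmaCount_fin_zero (w : Fin 0 → Bool) : sigmaCount w = 0 := by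
  simp [sigmaCount]

@[simp]
theorem sigmaCount_cons (c : Bool) (w : Fin m → Bool) :
    sigmaCount (Fin.cons c w : Fin (m + 1) → Bool) = sigmaCount w + c.toNat := by
  cases c <;> simp [sigmaCount, Fin.card_filter_univ_succ]

theorem sigmaCount_le (w : Fin m → Bool) : sigmaCount w ≤ m :=
  card_finset_fin_le _

@[simp]
theorem wordApply_fin_zero {X : Type*} (σ δ : X → X) (w : Fin 0 → Bool) (x : X) :
    wordApply σ δ w x = x := by
  simp [wordApply]

@[simp]
theorem wordApply_cons {X : Type*} (σ δ : X → X) (c : Bool) (w : Fin m → Bool) (x : X) :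
    wordApply σ δ (Fin.cons c w : Fin (m + 1) → Bool) x
      = (if c then σ else δ) (wordApply σ δ w x) := by
  simp [wordApply, List.ofFn_succ]

variable {M : Type*} [AddCommMonoid M]

theorem sum_words (k : ℕ) (f : (Fin m → Bool) → M) :
    ∑ w ∈ words m k, f w = ∑ w, if sigmaCount w = k then f w else 0 :=
  sum_filter _ _

theorem sum_range_sum_words (f : ℕ → (Fin m → Bool) → M) :
    ∑ k ∈ range (m + 1), ∑ w ∈ words m k, f k w = ∑ w, f (sigmaCount w) w := by
  have sigmaCount_mem (w : Fin m → Bool) : sigmaCount w ∈ range (m + 1) :=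
    mem_range_succ_iff.mpr (sigmaCount_le w)
  rw [← sum_fiberwise_of_maps_to fun w _ => sigmaCount_mem w]
  refine sum_congr rfl fun k _ => sum_congr rfl fun w hw => ?_
  rw [mem_words.mp hw]

theorem sum_fin_succ_pi {κ : Type*} [Fintype κ] (f : (Fin (m + 1) → κ) → M) :
    ∑ w, f w = ∑ c, ∑ w : Fin m → κ, f (Fin.cons c w) := by
  rw [← (Fin.consEquiv fun _ => κ).sum_comp, Fintype.sum_prod_type]
  rfl

end Words

theorem iterate_leibniz {A B C : Type*} [AddCommMonoid C] {act : A → B → C} {σ δ : A → A}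
    {D : B → B} {E : C →+ C} (h : ∀ a b, E (act a b) = act (σ a) (D b) + act (δ a) b)
    (m : ℕ) (a : A) (b : B) :
    E^[m] (act a b) = ∑ w : Fin m → Bool, act (wordApply σ δ w a) (D^[sigmaCount w] b) := by
  induction m with
  | zero => simp
  | succ m ih =>
    calc E^[m + 1] (act a b)
        = ∑ w : Fin m → Bool, E (act (wordApply σ δ w a) (D^[sigmaCount w] b)) := by
          rw [Function.iterate_succ_apply', ih, map_sum]
      _ = ∑ w : Fin (m + 1) → Bool, act (wordApply σ δ w a) (D^[sigmaCount w] b) := by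
          simp [h, sum_fin_succ_pi, sum_add_distrib, Function.iterate_succ_apply']

section SkewPolynomial

variable {B C : Type*} [AddCommMonoid B] [AddCommMonoid C]

/-- The operator `σ X + δ` on the polynomials with coefficients in `B`, where `X` raises the degree
by one and `σ`, `δ` act on coefficients. Its powers are generating functions of the maps `π_i^m`.
A polynomial is encoded as its finitely supported function of coefficients `ℕ →₀ B`, since
`Polynomial` requires a semiring of coefficients. -/
noncomputable def skewOperator (σ δ : B →+ B) : (ℕ →₀ B) →+ (ℕ →₀ B) :=
  (Finsupp.mapDomain.addMonoidHom Nat.succ).comp (Finsupp.mapRange.addMonoidHom σ)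
    + Finsupp.mapRange.addMonoidHom δ

@[simp]
theorem skewOperator_single (σ δ : B →+ B) (n : ℕ) (b : B) :
    skewOperator σ δ (Finsupp.single n b)
      = Finsupp.single (n + 1) (σ b) + Finsupp.single n (δ b) := by
  simp [skewOperator]

theorem iterate_skewOperator_single (σ δ : B →+ B) (m n : ℕ) (b : B) :
    (skewOperator σ δ)^[m] (Finsupp.single n b)
      = ∑ w : Fin m → Bool, Finsupp.single (n + sigmaCount w) (wordApply σ δ w b) := by
  simpa only [Nat.succ_iterate] using
    iterate_leibniz (act := fun b n => Finsupp.single n b) (D := Nat.succ)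
      (fun b n => skewOperator_single σ δ n b) m b n

theorem iterate_skewOperator_single_zero_apply (σ δ : B →+ B) (m i : ℕ) (b : B) :
    (skewOperator σ δ)^[m] (Finsupp.single 0 b) i = piFun σ δ m i b := by
  simp only [iterate_skewOperator_single, zero_add, Finsupp.finsetSum_apply, Finsupp.single_apply,
    piFun, sum_words]

theorem skewOperator_mapRange {σB δB : B →+ B} {σC δC : C →+ C} {f g h : B →+ C}
    (hσ : ∀ b, σC (f b) = g (σB b)) (hδ : ∀ b, δC (f b) = g (δB b) + h b) (p : ℕ →₀ B) :
    skewOperator σC δC (Finsupp.mapRange.addMonoidHom f p)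
      = Finsupp.mapRange.addMonoidHom g (skewOperator σB δB p)
        + Finsupp.mapRange.addMonoidHom h p := by
  induction p using Finsupp.induction_linear with
  | zero => simp only [map_zero, add_zero]
  | add p q hp hq => simp only [map_add, hp, hq, add_add_add_comm]
  | single n b =>
    rw [skewOperator_single, map_add]
    simp [hσ, hδ, add_assoc]

end SkewPolynomial

theorem stmt8_general {A B C : Type*} [AddCommMonoid B] [AddCommMonoid C] (act : A → B →+ C)
    (σA δA : A → A) (σB δB : B →+ B) (σC δC : C →+ C)
    (hσ : ∀ (a : A) (b : B), σC (act a b) = act (σA a) (σB b))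
    (hδ : ∀ (a : A) (b : B), δC (act a b) = act (σA a) (δB b) + act (δA a) b)
    (a : A) (b : B) (i m : ℕ) :
    piFun σC δC m i (act a b) =
      ∑ k ∈ range (m + 1), ∑ w ∈ words m k, act (wordApply σA δA w a) (piFun σB δB k i b) := by
  let polyAct (a : A) : (ℕ →₀ B) →+ (ℕ →₀ C) := Finsupp.mapRange.addMonoidHom (act a)
  have leibniz : (skewOperator σC δC)^[m] (polyAct a (Finsupp.single 0 b))
      = ∑ w : Fin m → Bool, polyAct (wordApply σA δA w a)
          ((skewOperator σB δB)^[sigmaCount w] (Finsupp.single 0 b)) :=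
    iterate_leibniz (act := fun a p => polyAct a p)
      (fun a p => skewOperator_mapRange (hσ a) (hδ a) p) m a _
  have coeff_leibniz := DFunLike.congr_fun leibniz i
  rw [sum_range_sum_words fun k w => act (wordApply σA δA w a) (piFun σB δB k i b)]
  simpa [polyAct, iterate_skewOperator_single_zero_apply] using coeff_leibniz

/-- Leibniz's identity: Let `B` be an abelian group with operators
in a set `A` (each `a ∈ A` acting as the additive endomorphism `act a`), let
`σA δA : A → A` be maps and `σB δB` additive endomorphisms of `B`.  If `σB` is
`σA`-twisted and `δB` is a `δA`-twisted `σA`-derivation, then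
`π_i^m (a • b) = ∑_{k=0}^{m} ∑_{w ∈ W_{m,k}} w_A(a) • π_i^k(b)`,
where `W_{m,k}` is the set of words of length `m` in `σ`, `δ` with exactly `k`
occurrences of `σ`, and `w_A(a)` is the result of applying to `a` the
corresponding composition of `σA` and `δA`. -/
theorem stmt8 {A B : Type*} [AddCommGroup B] (act : A → B →+ B)
    (σA δA : A → A) (σB δB : B →+ B)
    (hσ : ∀ (a : A) (b : B), σB (act a b) = act (σA a) (σB b))
    (hδ : ∀ (a : A) (b : B), δB (act a b) = act (σA a) (δB b) + act (δA a) b)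
    (a : A) (b : B) (i m : ℕ) :
    piFun ⇑σB ⇑δB m i (act a b) =
      ∑ k ∈ Finset.range (m + 1), ∑ w ∈ words m k,
        act (wordApply σA δA w a) (piFun ⇑σB ⇑δB k i b) :=
  stmt8_general act σA δA σB δB σB δB hσ hδ a b i m
end

section
/- Let B[x;σ_B,δ_B] be an Ore group extension of an abelian group B with operators in a set A with zero element ε. For b ∈ B and i, j, k ∈ ℕ the following hold: (i) β_{i+j}( A^k( (Ax^i)(bx^j) ) ) = ( A^{k+1} σ_B^i(b) ) x^{i+j}, where (Ax^i)(bx^j) denotes the subset { (a x^i)(b x^j) : a ∈ A } of B[x] and A acts on B[x] coefficientwise; (ii) if σ_B^i(b) ∈ [{σ_B^i(b)}], then σ_B^i(b) x^{i+j} ∈ β_{i+j}( ⟨ (Ax^i)(bx^j) ⟩ ), where ⟨T⟩ denotes the smallest A-stable subgroup of the abelian group B[x] (with the coefficientwise A-action) containing T. -/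
/-- The Ore action of a polynomial `α = ∑ aᵢ xⁱ` over the operator set `A` on a
polynomial `β = ∑ bⱼ xʲ` over the abelian group `B` (polynomials are encoded as
finitely supported functions `ℕ →₀ _`), given by
`α β = ∑_{i,j,k} (aᵢ • π_k^i(bⱼ)) x^{k+j}`, where the maps `π_k^i` are built
from `σ` and `δ` (only the terms with `k ≤ i` can be nonzero). -/
noncomputable def oreAct {A B : Type*} [Zero A] [AddCommGroup B] (act : A → B → B) (σ δ : B → B)
    (α : ℕ →₀ A) (β : ℕ →₀ B) : ℕ →₀ B :=
  α.sum fun i a => β.sum fun j b =>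
    ∑ k ∈ Finset.range (i + 1), Finsupp.single (k + j) (act a (piFun σ δ i k b))

/-- `opSet act S n` is the set `Aⁿ S` of elements
`a₁ (a₂ (⋯ (aₙ s) ⋯))` with `a₁, …, aₙ ∈ A` and `s ∈ S` (and `A⁰ S = S`). -/
def opSet {A B : Type*} (act : A → B → B) (S : Set B) : ℕ → Set B
  | 0 => S
  | n + 1 => {x | ∃ a : A, ∃ s ∈ opSet act S n, x = act a s}

/-- A subgroup of an abelian group `B` with operators in `A` is *stable* if it
is closed under the action of `A`. -/
def IsStableAdd {A B : Type*} [AddGroup B] (act : A → B → B) (C : AddSubgroup B) : Prop :=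
  ∀ a : A, ∀ b ∈ C, act a b ∈ C

/-- The smallest stable subgroup `⟨S⟩` of `B` containing the set `S`. -/
def stableClosureAdd {A B : Type*} [AddGroup B] (act : A → B → B) (S : Set B) : AddSubgroup B :=
  sInf {C : AddSubgroup B | IsStableAdd act C ∧ S ⊆ C}

/-- `[S]` : the subgroup of `B` generated by the union of the sets `Aⁿ S`, `n ≥ 1`. -/
def bracketAdd {A B : Type*} [AddGroup B] (act : A → B → B) (S : Set B) : AddSubgroup B :=
  AddSubgroup.closure (⋃ n : ℕ, opSet act S (n + 1))

/-- A group `B` with operators in `A` is *stably Noetherian* if every ascending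
chain of stable subgroups of `B` eventually stabilizes. -/
def StablyNoetherianAdd {A B : Type*} [AddGroup B] (act : A → B → B) : Prop :=
  ∀ f : ℕ → AddSubgroup B, (∀ n, IsStableAdd act (f n)) → Monotone f →
    ∃ N : ℕ, ∀ n : ℕ, N ≤ n → f n = f N

/-- The coefficientwise action of the operator set `A` on the polynomial group
`B[x]` (this is the action of `A` via the constant polynomials). -/
noncomputable def coeffAct {A B : Type*} [AddCommGroup B] (act : A → B → B)
    (a : A) (p : ℕ →₀ B) : ℕ →₀ B :=
  p.sum fun n b => Finsupp.single n (act a b)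

/-! Reading off the coefficient of `x^(i+j)` is an additive map `B[x] → B` commuting with the action
of `A`. In `(a xⁱ)(b xʲ)` only the word consisting of `i` letters `σ` reaches the degree `i + j`, so
this map sends `(A xⁱ)(b xʲ)` onto `A σⁱ(b)`. Equivariant maps commute with forming `Aᵏ T` and with
forming `⟨T⟩`, which gives (i) and, because `[{c}] ≤ ⟨A c⟩`, also (ii). -/

section Words

theorem words_self (m : ℕ) : words m m = {fun _ => true} := by
  ext w
  have card_eq_iff : (Finset.univ.filter fun t => w t = true).card = m ↔ ∀ t, w t = true := by
    simpa only [Finset.card_univ, Fintype.card_fin, Finset.mem_univ, true_imp_iff] using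
      Finset.card_filter_eq_iff (s := Finset.univ) (p := fun t => w t = true)
  simp only [words, Finset.mem_filter, Finset.mem_univ, true_and, Finset.mem_singleton,
    card_eq_iff, funext_iff]

theorem wordApply_const_true {X : Type*} (σ δ : X → X) (m : ℕ) (x : X) :
    wordApply σ δ (fun _ : Fin m => true) x = σ^[m] x := by
  simp only [wordApply, if_true]
  induction m with
  | zero => rfl
  | succ m ih => rw [List.ofFn_succ, List.foldr_cons, ih, Function.iterate_succ_apply']

theorem piFun_self {B : Type*} [AddCommMonoid B] (σ δ : B → B) (i : ℕ) (b : B) :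
    piFun σ δ i i b = σ^[i] b := by
  rw [piFun, words_self, Finset.sum_singleton, wordApply_const_true]

end Words

section Operators

variable {A B C : Type*}

theorem opSet_opSet (act : A → B → B) (S : Set B) (m n : ℕ) :
    opSet act (opSet act S m) n = opSet act S (m + n) := by
  induction n with
  | zero => rfl
  | succ n ih => rw [opSet, ih]; rfl

theorem image_opSet {actB : A → B → B} {actC : A → C → C} {f : B → C}
    (hf : ∀ a, Function.Semiconj f (actB a) (actC a)) (S : Set B) (n : ℕ) :
    f '' opSet actB S n = opSet actC (f '' S) n := by
  induction n with
  | zero => rfl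
  | succ n ih =>
    rw [opSet, opSet, ← ih]
    ext c
    constructor
    · rintro ⟨_, ⟨a, s, hs, rfl⟩, rfl⟩
      exact ⟨a, f s, Set.mem_image_of_mem f hs, hf a s⟩
    · rintro ⟨a, _, ⟨s, hs, rfl⟩, rfl⟩
      exact ⟨actB a s, ⟨a, s, hs, rfl⟩, hf a s⟩

end Operators

section StableClosure

variable {A B C : Type*} [AddGroup B] [AddGroup C]

theorem subset_stableClosureAdd (act : A → B → B) (S : Set B) : S ⊆ stableClosureAdd act S :=
  fun _ hs => AddSubgroup.mem_sInf.2 fun _ hD => hD.2 hs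

theorem isStableAdd_stableClosureAdd (act : A → B → B) (S : Set B) :
    IsStableAdd act (stableClosureAdd act S) :=
  fun a b hb => AddSubgroup.mem_sInf.2 fun D hD => hD.1 a b (AddSubgroup.mem_sInf.1 hb D hD)

theorem stableClosureAdd_le {act : A → B → B} {S : Set B} {D : AddSubgroup B}
    (hD : IsStableAdd act D) (hS : S ⊆ D) : stableClosureAdd act S ≤ D :=
  sInf_le ⟨hD, hS⟩

theorem IsStableAdd.map {actB : A → B → B} {actC : A → C → C} {f : B →+ C}
    (hf : ∀ a, Function.Semiconj f (actB a) (actC a)) {D : AddSubgroup B}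
    (hD : IsStableAdd actB D) : IsStableAdd actC (D.map f) := by
  rintro a _ ⟨b, hb, rfl⟩
  exact ⟨actB a b, hD a b hb, hf a b⟩

theorem IsStableAdd.comap {actB : A → B → B} {actC : A → C → C} {f : B →+ C}
    (hf : ∀ a, Function.Semiconj f (actB a) (actC a)) {D : AddSubgroup C}
    (hD : IsStableAdd actC D) : IsStableAdd actB (D.comap f) := fun a b hb => by
  rw [AddSubgroup.mem_comap, hf a b]
  exact hD a (f b) hb

theorem map_stableClosureAdd {actB : A → B → B} {actC : A → C → C} {f : B →+ C}
    (hf : ∀ a, Function.Semiconj f (actB a) (actC a)) (S : Set B) :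
    (stableClosureAdd actB S).map f = stableClosureAdd actC (f '' S) := by
  apply le_antisymm
  · have subset_comap : S ⊆ (stableClosureAdd actC (f '' S)).comap f :=
      fun _ hs => subset_stableClosureAdd actC (f '' S) (Set.mem_image_of_mem f hs)
    exact AddSubgroup.map_le_iff_le_comap.2
      (stableClosureAdd_le ((isStableAdd_stableClosureAdd actC _).comap hf) subset_comap)
  · exact stableClosureAdd_le ((isStableAdd_stableClosureAdd actB S).map hf)
      (Set.image_mono (subset_stableClosureAdd actB S))

theorem opSet_subset_stableClosureAdd (act : A → B → B) (S : Set B) (n : ℕ) :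
    opSet act S n ⊆ stableClosureAdd act S := by
  induction n with
  | zero => exact subset_stableClosureAdd act S
  | succ n ih =>
    rintro _ ⟨a, s, hs, rfl⟩
    exact isStableAdd_stableClosureAdd act S a s (ih hs)

theorem bracketAdd_le_stableClosureAdd_opSet_one (act : A → B → B) (S : Set B) :
    bracketAdd act S ≤ stableClosureAdd act (opSet act S 1) := by
  refine (AddSubgroup.closure_le _).2 (Set.iUnion_subset fun n => ?_)
  rw [add_comm n 1, ← opSet_opSet]
  exact opSet_subset_stableClosureAdd act (opSet act S 1) n

end StableClosure

section Coefficients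

theorem sum_range_single_add_apply {M : Type*} [AddCommMonoid M] (c : ℕ → M) {m n : ℕ}
    (hn : n < m) (j : ℕ) : (∑ k ∈ Finset.range m, Finsupp.single (k + j) (c k)) (n + j) = c n := by
  simp only [Finsupp.finsetSum_apply, Finsupp.single_apply, add_left_inj, Finset.sum_ite_eq',
    Finset.mem_range, hn, if_true]

variable {A B : Type*} [AddCommGroup B] {act : A → B → B}

theorem coeffAct_eq_mapRange {a : A} (ha : act a 0 = 0) (p : ℕ →₀ B) :
    coeffAct act a p = p.mapRange (act a) ha := by
  rw [← Finsupp.sum_single (p.mapRange (act a) ha),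
    Finsupp.sum_mapRange_index fun n => Finsupp.single_zero n, coeffAct]

theorem semiconj_applyAddHom_coeffAct {a : A} (ha : act a 0 = 0) (n : ℕ) :
    Function.Semiconj (Finsupp.applyAddHom n : (ℕ →₀ B) →+ B) (coeffAct act a) (act a) := by
  intro p
  rw [Finsupp.applyAddHom_apply, coeffAct_eq_mapRange ha, Finsupp.mapRange_apply,
    Finsupp.applyAddHom_apply]

variable [Zero A] {σ : B → B}

theorem oreAct_single_single_apply_add {a : A} (ha : act a 0 = 0) (hε : ∀ b, act 0 b = 0)
    (hσ : σ 0 = 0) (δ : B → B) (b : B) (i j : ℕ) :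
    oreAct act σ δ (Finsupp.single i a) (Finsupp.single j b) (i + j) = act a (σ^[i] b) := by
  have top_coeff (c : B) : (∑ k ∈ Finset.range (i + 1),
      Finsupp.single (k + j) (act a (piFun σ δ i k c))) (i + j) = act a (σ^[i] c) := by
    rw [sum_range_single_add_apply _ i.lt_succ_self, piFun_self]
  rw [oreAct, Finsupp.sum_single_index, Finsupp.sum_apply, Finsupp.sum_single_index, top_coeff]
  · rw [top_coeff, Function.iterate_fixed hσ, ha]
  · simp only [hε, Finsupp.single_zero, Finset.sum_const_zero, Finsupp.sum]

theorem image_applyAddHom_oreAct_single_single (hact : ∀ a, act a 0 = 0)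
    (hε : ∀ b, act 0 b = 0) (hσ : σ 0 = 0) (δ : B → B) (b : B) (i j : ℕ) :
    (Finsupp.applyAddHom (i + j) : (ℕ →₀ B) →+ B) ''
        {p | ∃ a : A, p = oreAct act σ δ (Finsupp.single i a) (Finsupp.single j b)} =
      opSet act {σ^[i] b} 1 := by
  ext c
  constructor
  · rintro ⟨_, ⟨a, rfl⟩, rfl⟩
    exact ⟨a, _, rfl, oreAct_single_single_apply_add (hact a) hε hσ δ b i j⟩
  · rintro ⟨a, _, rfl, rfl⟩
    exact ⟨_, ⟨a, rfl⟩, oreAct_single_single_apply_add (hact a) hε hσ δ b i j⟩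

end Coefficients

theorem stmt13_general {A B : Type*} [Zero A] [AddCommGroup B] (act : A → B → B)
    (hact : ∀ a : A, act a 0 = 0) (hε : ∀ b : B, act (0 : A) b = 0)
    (σ δ : B → B) (hσ : σ 0 = 0) (b : B) (i j k : ℕ) :
    ((fun p : ℕ →₀ B => Finsupp.single (i + j) (p (i + j))) ''
        (opSet (coeffAct act)
          {p : ℕ →₀ B | ∃ a : A,
            p = oreAct act σ δ (Finsupp.single i a) (Finsupp.single j b)} k)
      = (fun c : B => (Finsupp.single (i + j) c : ℕ →₀ B)) ''
          (opSet act {σ^[i] b} (k + 1))) ∧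
    (σ^[i] b ∈ bracketAdd act {σ^[i] b} →
      (Finsupp.single (i + j) (σ^[i] b) : ℕ →₀ B) ∈
        (fun p : ℕ →₀ B => Finsupp.single (i + j) (p (i + j))) ''
          (stableClosureAdd (coeffAct act)
            {p : ℕ →₀ B | ∃ a : A,
              p = oreAct act σ δ (Finsupp.single i a) (Finsupp.single j b)} :
            Set (ℕ →₀ B))) := by
  have coeff_equivariant (a : A) := semiconj_applyAddHom_coeffAct (hact a) (i + j)
  have coeff_image := image_applyAddHom_oreAct_single_single hact hε hσ δ b i j
  constructor
  · rw [add_comm k 1, ← opSet_opSet, ← coeff_image, ← image_opSet coeff_equivariant,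
      Set.image_image]
    rfl
  · intro hb
    have hb_map := bracketAdd_le_stableClosureAdd_opSet_one act _ hb
    rw [← coeff_image, ← map_stableClosureAdd coeff_equivariant] at hb_map
    obtain ⟨p, hp, hpb⟩ := hb_map
    exact ⟨p, hp, congrArg (Finsupp.single (i + j)) hpb⟩

/-- Let `B[x;σ,δ]` be an Ore group extension of an abelian group
`B` with operators in a set `A` with zero element.  For `b ∈ B` and
`i j k : ℕ`:
(i)  `β_{i+j}( A^k( (A xⁱ)(b xʲ) ) ) = ( A^{k+1} σᶦ(b) ) x^{i+j}`, where
`(A xⁱ)(b xʲ) = { (a xⁱ)(b xʲ) : a ∈ A } ⊆ B[x]` and `A` acts on `B[x]`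
coefficientwise;
(ii) if `σᶦ(b) ∈ [{σᶦ(b)}]`, then
`σᶦ(b) x^{i+j} ∈ β_{i+j}( ⟨ (A xⁱ)(b xʲ) ⟩ )`, where `⟨T⟩` is the smallest
`A`-stable subgroup of `B[x]` containing `T`.
Here `β_n : B[x] → B[x]` is the projection `∑ bᵢ xⁱ ↦ bₙ xⁿ`. -/
theorem stmt13 {A B : Type*} [Zero A] [AddCommGroup B] (act : A → B → B)
    (hadd : ∀ (a : A) (b₁ b₂ : B), act a (b₁ + b₂) = act a b₁ + act a b₂)
    (hε : ∀ b : B, act (0 : A) b = 0)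
    (σ δ : B →+ B) (b : B) (i j k : ℕ) :
    ((fun p : ℕ →₀ B => Finsupp.single (i + j) (p (i + j))) ''
        (opSet (coeffAct act)
          {p : ℕ →₀ B | ∃ a : A,
            p = oreAct act ⇑σ ⇑δ (Finsupp.single i a) (Finsupp.single j b)} k)
      = (fun c : B => (Finsupp.single (i + j) c : ℕ →₀ B)) ''
          (opSet act {(⇑σ)^[i] b} (k + 1))) ∧
    ((⇑σ)^[i] b ∈ bracketAdd act {(⇑σ)^[i] b} →
      (Finsupp.single (i + j) ((⇑σ)^[i] b) : ℕ →₀ B) ∈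
        (fun p : ℕ →₀ B => Finsupp.single (i + j) (p (i + j))) ''
          (stableClosureAdd (coeffAct act)
            {p : ℕ →₀ B | ∃ a : A,
              p = oreAct act ⇑σ ⇑δ (Finsupp.single i a) (Finsupp.single j b)} :
            Set (ℕ →₀ B))) := by
  have hact (a : A) : act a 0 = 0 := map_zero (AddMonoidHom.mk' (act a) (hadd a))
  exact stmt13_general act hact hε σ δ (map_zero σ) b i j k
end

section
/- Let B be an abelian group with operators in a set A with zero element ε (so εb = 0 for all b ∈ B), and consider the polynomial group B[x] := B[x; id_B, 0] as a group with operators in A[x], via (∑_i a_i x^i)(∑_j b_j x^j) := ∑_{i,j} (a_i b_j) x^{i+j}. Then B[x] is stably Noetherian if and only if B is stably Noetherian and the action of A on B is weakly s-unital. -/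
/-! For a stable subgroup `C` of `B[x]`, let `Lₙ(C)` be the group of coefficients at `xⁿ` of those
elements of `C` that have degree at most `n`. Each `Lₙ(C)` is stable. Weak s-unitality writes `b` as
a combination of elements `a₁ (⋯ (aₘ b))` with `m ≥ 1`, and replacing the outermost `a₁` by `a₁ xᵏ`
gives `Lₙ(C) ≤ Lₙ₊ₖ(C)`. Subtracting leading terms shows that the family `L(C)` grows strictly with
`C`, and monotone families indexed by a well-quasi-order with values in a poset with the ascending
chain condition again satisfy that condition.

Conversely, if `T ≤ D` are subgroups of `B` with `A D ⊆ T`, then any choice of coefficient groups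
among `T` and `D` defines a stable subgroup of `B[x]`, so the chain condition forces `T = D`.
Weak s-unitality is the case `T = [{b}]`, `D = {c | A c ⊆ T}`.

The exponents need not be natural numbers. In several variables a monomial order gives meaning to
leading coefficients, while Dickson's lemma says that divisibility of monomials is a
well-quasi-order.
-/

section WellQuasiOrder

variable {ι P : Type*} [PartialOrder P] [WellFoundedGT P]

theorem wellFoundedGT_monotone_of_wellQuasiOrdered {r : ι → ι → Prop} [IsPreorder ι r]
    (hr : WellQuasiOrdered r) :
    WellFoundedGT {f : ι → P // ∀ i j, r i j → f i ≤ f j} := by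
  refine ⟨RelEmbedding.wellFounded_iff_isEmpty.2 ⟨fun f => ?_⟩⟩
  have hf : StrictMono f := fun _ _ h => f.map_rel_iff.2 h
  have exists_lt (k : ℕ) : ∃ i, (f k).1 i < (f (k + 1)).1 i :=
    (Pi.lt_def.1 (hf k.lt_succ_self)).2
  choose i hi using exists_lt
  obtain ⟨g, hg⟩ := hr.exists_monotone_subseq i
  refine not_strictMono_of_wellFoundedGT (fun m => (f (g m)).1 (i (g m)))
    (strictMono_nat_of_lt_succ fun m => ?_)
  calc (f (g m)).1 (i (g m)) < (f (g m + 1)).1 (i (g m)) := hi _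
    _ ≤ (f (g (m + 1))).1 (i (g m)) :=
        hf.monotone (Nat.succ_le_of_lt (g.strictMono m.lt_succ_self)) _
    _ ≤ (f (g (m + 1))).1 (i (g (m + 1))) := (f _).2 _ _ (hg _ _ m.le_succ)

end WellQuasiOrder

section AddDivides

variable {ι : Type*}

/-- Divisibility of the monomials `xⁱ` and `xʲ`, expressed on exponents. The cofactor is added on
the left because operators act on the left. -/
def AddDivides [Add ι] (i j : ι) : Prop :=
  ∃ k, k + i = j

instance [AddMonoid ι] : IsPreorder ι AddDivides where
  refl i := ⟨0, zero_add i⟩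
  trans := by
    rintro i _ _ ⟨k, rfl⟩ ⟨l, rfl⟩
    exact ⟨l + k, add_assoc l k i⟩

theorem wellQuasiOrdered_addDivides [AddCommMagma ι] [PartialOrder ι] [CanonicallyOrderedAdd ι]
    [WellQuasiOrderedLE ι] : WellQuasiOrdered (AddDivides (ι := ι)) := fun f => by
  obtain ⟨m, n, hmn, hle⟩ := wellQuasiOrdered_le f
  obtain ⟨k, hk⟩ := le_iff_exists_add'.1 hle
  exact ⟨m, n, hmn, k, hk.symm⟩

end AddDivides

section Stable

variable {A B : Type*} [AddGroup B] {act : A → B → B} {S : Set B} {C D : AddSubgroup B}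

/-- The poset of stable subgroups; its ascending chain condition is stable Noetherianity. -/
abbrev StableAddSubgroup (act : A → B → B) : Type _ :=
  {C : AddSubgroup B // IsStableAdd act C}

theorem stablyNoetherianAdd_iff_wellFoundedGT :
    StablyNoetherianAdd act ↔ WellFoundedGT (StableAddSubgroup act) := by
  rw [wellFoundedGT_iff_monotone_chain_condition]
  refine ⟨fun h f => ?_, fun h f hstable hmono => ?_⟩
  · obtain ⟨N, hN⟩ := h (fun n => (f n).1) (fun n => (f n).2) fun _ _ hmn => f.monotone hmn
    exact ⟨N, fun n hn => Subtype.ext (hN n hn).symm⟩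
  · obtain ⟨N, hN⟩ := h ⟨fun n => ⟨f n, hstable n⟩, hmono⟩
    exact ⟨N, fun n hn => congrArg Subtype.val (hN n hn).symm⟩

theorem IsStableAdd.opSet_subset (hC : IsStableAdd act C) (hS : S ⊆ C) :
    ∀ n, opSet act S n ⊆ C
  | 0 => hS
  | n + 1 => by
    rintro _ ⟨a, s, hs, rfl⟩
    exact hC a s (hC.opSet_subset hS n hs)

theorem IsStableAdd.bracketAdd_le (hC : IsStableAdd act C) (hS : S ⊆ C)
    (hCD : ∀ a, ∀ c ∈ C, act a c ∈ D) : bracketAdd act S ≤ D := by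
  refine (AddSubgroup.closure_le D).2 (Set.iUnion_subset fun n => ?_)
  rintro _ ⟨a, s, hs, rfl⟩
  exact hCD a s (hC.opSet_subset hS n hs)

theorem act_mem_bracketAdd_of_mem_opSet {n : ℕ} {s : B} (hs : s ∈ opSet act S n) (a : A) :
    act a s ∈ bracketAdd act S :=
  AddSubgroup.subset_closure (Set.mem_iUnion.2 ⟨n, a, s, hs, rfl⟩)

theorem isStableAdd_bracketAdd
    (hadd : ∀ (a : A) (b₁ b₂ : B), act a (b₁ + b₂) = act a b₁ + act a b₂) (S : Set B) :
    IsStableAdd act (bracketAdd act S) := by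
  intro a
  suffices bracketAdd act S ≤ (bracketAdd act S).comap (AddMonoidHom.mk' (act a) (hadd a)) from
    fun b hb => this hb
  refine (AddSubgroup.closure_le _).2 (Set.iUnion_subset fun n s hs => ?_)
  exact act_mem_bracketAdd_of_mem_opSet hs a

end Stable

section CoeffAddSubgroup

variable {ι B : Type*} [AddGroup B] {G H : ι → AddSubgroup B}

/-- The group of polynomials whose coefficient at `xⁱ` lies in `G i`, for every `i`. -/
def coeffAddSubgroup (G : ι → AddSubgroup B) : AddSubgroup (ι →₀ B) where
  carrier := {p | ∀ i, p i ∈ G i}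
  zero_mem' i := (G i).zero_mem
  add_mem' hp hq i := (G i).add_mem (hp i) (hq i)
  neg_mem' hp i := (G i).neg_mem (hp i)

theorem single_mem_coeffAddSubgroup {i : ι} {b : B} :
    Finsupp.single i b ∈ coeffAddSubgroup G ↔ b ∈ G i := by
  refine ⟨fun h => by simpa using h i, fun hb j => ?_⟩
  obtain rfl | hij := eq_or_ne i j
  · simpa using hb
  · simp [Finsupp.single_eq_of_ne' hij]

theorem coeffAddSubgroup_le_iff : coeffAddSubgroup G ≤ coeffAddSubgroup H ↔ G ≤ H :=
  ⟨fun h _ _ hb => single_mem_coeffAddSubgroup.1 (h (single_mem_coeffAddSubgroup.2 hb)),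
    fun h _ hp i => h i (hp i)⟩

end CoeffAddSubgroup

section PolyAct

variable {ι A B : Type*} [Zero A] [AddCommGroup B] {act : A → B → B}

/-- The action of `A[x]` on `B[x]`, where the exponents of `x` range over `ι`. -/
noncomputable def polyAct [Add ι] (act : A → B → B) (α : ι →₀ A) (β : ι →₀ B) : ι →₀ B :=
  α.sum fun i a => β.sum fun j b => Finsupp.single (i + j) (act a b)

theorem isStableAdd_coeffAddSubgroup [Add ι] {G : ι → AddSubgroup B}
    (hG : ∀ i j a, ∀ b ∈ G j, act a b ∈ G (i + j)) :
    IsStableAdd (polyAct act) (coeffAddSubgroup G) := fun _ _ hβ =>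
  AddSubgroup.sum_mem _ fun i _ => AddSubgroup.sum_mem _ fun j _ =>
    single_mem_coeffAddSubgroup.2 (hG i j _ _ (hβ j))

theorem StablyNoetherianAdd.of_polyAct [Add ι] [Nonempty ι]
    (h : StablyNoetherianAdd (polyAct (ι := ι) act)) : StablyNoetherianAdd act := by
  rw [stablyNoetherianAdd_iff_wellFoundedGT] at h ⊢
  let extend (C : StableAddSubgroup act) : StableAddSubgroup (polyAct (ι := ι) act) :=
    ⟨coeffAddSubgroup fun _ => C.1, isStableAdd_coeffAddSubgroup fun _ _ => C.2⟩
  have extend_le_iff (C D) : extend C ≤ extend D ↔ C ≤ D :=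
    coeffAddSubgroup_le_iff.trans Function.const_le_const
  exact (strictMono_of_le_iff_le fun C D => (extend_le_iff C D).symm).wellFoundedGT

theorem StablyNoetherianAdd.le_of_act_mem [Add ι] [Infinite ι]
    (h : StablyNoetherianAdd (polyAct (ι := ι) act)) {T D : AddSubgroup B} (hTD : T ≤ D)
    (hact : ∀ a, ∀ d ∈ D, act a d ∈ T) : D ≤ T := by
  classical
  rw [stablyNoetherianAdd_iff_wellFoundedGT] at h
  by_contra hDT
  let G (s : Finset ι) : ι → AddSubgroup B := s.piecewise (fun _ => D) fun _ => T
  have T_le (s i) : T ≤ G s i := Finset.le_piecewise_of_le_of_le s (fun _ => hTD) le_rfl i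
  have le_D (s i) : G s i ≤ D := Finset.piecewise_le_of_le_of_le s le_rfl (fun _ => hTD) i
  let F (s : Finset ι) : StableAddSubgroup (polyAct (ι := ι) act) :=
    ⟨coeffAddSubgroup (G s), isStableAdd_coeffAddSubgroup fun i j a b hb =>
      T_le s (i + j) (hact a b (le_D s j hb))⟩
  have G_le_iff (s t) : G s ≤ G t ↔ s ≤ t := by
    refine ⟨fun hst i hi => ?_, fun hst i => ?_⟩
    · by_contra hit
      exact hDT (by simpa [G, hi, hit] using hst i)
    · by_cases hi : i ∈ s
      · simp [G, hi, hst hi]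
      · simpa [G, hi] using T_le t i
  have strictMono_F : StrictMono F :=
    strictMono_of_le_iff_le fun s t => (coeffAddSubgroup_le_iff.trans (G_le_iff s t)).symm
  have strictMono_range : StrictMono Finset.range :=
    strictMono_of_le_iff_le fun _ _ => Finset.range_subset_range.symm
  exact not_strictMono_of_wellFoundedGT _ (strictMono_F.comp
    ((Finset.mapEmbedding (Infinite.natEmbedding ι)).strictMono.comp strictMono_range))

theorem StablyNoetherianAdd.mem_bracketAdd_singleton [Add ι] [Infinite ι]
    (hadd : ∀ (a : A) (b₁ b₂ : B), act a (b₁ + b₂) = act a b₁ + act a b₂)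
    (h : StablyNoetherianAdd (polyAct (ι := ι) act)) (b : B) : b ∈ bracketAdd act {b} := by
  let T := bracketAdd act {b}
  let D : AddSubgroup B := ⨅ a, T.comap (AddMonoidHom.mk' (act a) (hadd a))
  have mem_D {c : B} : c ∈ D ↔ ∀ a, act a c ∈ T := by simp [D, AddSubgroup.mem_iInf]
  have hTD : T ≤ D := fun c hc => mem_D.2 fun a => isStableAdd_bracketAdd hadd {b} a c hc
  have hbD : b ∈ D := mem_D.2 (act_mem_bracketAdd_of_mem_opSet (n := 0) rfl)
  exact h.le_of_act_mem hTD (fun a d hd => mem_D.1 hd a) hbD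

theorem polyAct_single [Add ι]
    (hadd : ∀ (a : A) (b₁ b₂ : B), act a (b₁ + b₂) = act a b₁ + act a b₂)
    (hε : ∀ b : B, act (0 : A) b = 0) (i : ι) (a : A) (p : ι →₀ B) :
    polyAct act (Finsupp.single i a) p =
      (Finsupp.mapRange.addMonoidHom (AddMonoidHom.mk' (act a) (hadd a)) p).mapDomain (i + ·) := by
  rw [polyAct, Finsupp.sum_single_index (by simp [hε])]
  exact (Finsupp.sum_mapRange_index (f := AddMonoidHom.mk' (act a) (hadd a)) (hf := map_zero _)
    fun _ => Finsupp.single_zero _).symm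

end PolyAct

section LeadingCoeffs

variable {ι A B : Type*} [LinearOrder ι] [AddCommGroup B] {C D : AddSubgroup (ι →₀ B)}

/-- The group of coefficients at `xⁿ` of the elements of `C` of degree at most `n`: the leading
coefficients of the elements of `C` of degree exactly `n`, together with `0`. -/
def leadingCoeffs (C : AddSubgroup (ι →₀ B)) (n : ι) : AddSubgroup B where
  carrier := {b | ∃ p ∈ C, (∀ m, n < m → p m = 0) ∧ p n = b}
  zero_mem' := ⟨0, C.zero_mem, by simp, rfl⟩
  add_mem' := by
    rintro _ _ ⟨p, hp, hpn, rfl⟩ ⟨q, hq, hqn, rfl⟩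
    exact ⟨p + q, C.add_mem hp hq, fun m hm => by simp [hpn m hm, hqn m hm], rfl⟩
  neg_mem' := by
    rintro _ ⟨p, hp, hpn, rfl⟩
    exact ⟨-p, C.neg_mem hp, fun m hm => by simp [hpn m hm], rfl⟩

theorem leadingCoeffs_mono (h : C ≤ D) (n : ι) : leadingCoeffs C n ≤ leadingCoeffs D n :=
  fun _ ⟨p, hp, hpn⟩ => ⟨p, h hp, hpn⟩

theorem max_support_lt_coe_iff {p : ι →₀ B} {n : ι} :
    p.support.max < n ↔ ∀ m, n ≤ m → p m = 0 := by
  refine (Finset.sup_lt_iff (WithBot.bot_lt_coe n)).trans (forall_congr' fun m => ?_)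
  rw [Finsupp.mem_support_iff, WithBot.coe_lt_coe, ← not_le, not_imp_not]

theorem le_of_leadingCoeffs_le [WellFoundedLT ι] (hCD : C ≤ D)
    (hlead : ∀ n, leadingCoeffs D n ≤ leadingCoeffs C n) : D ≤ C := by
  intro p hp
  induction hd : p.support.max using WellFoundedLT.induction generalizing p with
  | ind d ih =>
    subst hd
    obtain rfl | hp0 := eq_or_ne p 0
    · exact C.zero_mem
    obtain ⟨n, hn⟩ := Finset.max_of_nonempty (Finsupp.support_nonempty_iff.2 hp0)
    have hpn (m : ι) (hm : n < m) : p m = 0 :=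
      Finsupp.notMem_support_iff.1 (Finset.notMem_of_max_lt hm hn)
    obtain ⟨q, hq, hqn, hqp⟩ := hlead n ⟨p, hp, hpn, rfl⟩
    have hlt : (p - q).support.max < p.support.max := by
      refine hn ▸ max_support_lt_coe_iff.2 fun m hm => ?_
      obtain rfl | hm := hm.eq_or_lt
      · simp [hqp]
      · simp [hpn m hm, hqn m hm]
    simpa using C.add_mem (ih _ hlt (D.sub_mem hp (hCD hq)) rfl) hq

variable [Zero A] {act : A → B → B}
  (hadd : ∀ (a : A) (b₁ b₂ : B), act a (b₁ + b₂) = act a b₁ + act a b₂)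
  (hε : ∀ b : B, act (0 : A) b = 0)

include hadd hε

theorem act_mem_leadingCoeffs_add [Add ι] [AddLeftStrictMono ι]
    (hC : IsStableAdd (polyAct act) C) (i : ι) {n : ι} (a : A) {b : B}
    (hb : b ∈ leadingCoeffs C n) : act a b ∈ leadingCoeffs C (i + n) := by
  obtain ⟨p, hp, hpn, rfl⟩ := hb
  have hinj : Function.Injective (i + · : ι → ι) := add_right_strictMono.injective
  refine ⟨polyAct act (Finsupp.single i a) p, hC _ _ hp, fun m hm => ?_, ?_⟩
  · rw [polyAct_single hadd hε]
    by_cases hmi : m ∈ Set.range (i + · : ι → ι)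
    · obtain ⟨k, rfl⟩ := hmi
      have hk : p k = 0 := hpn k (add_right_strictMono.lt_iff_lt.1 hm)
      rw [Finsupp.mapDomain_apply hinj, Finsupp.mapRange.addMonoidHom_apply,
        Finsupp.mapRange_apply, hk, map_zero]
    · exact Finsupp.mapDomain_of_notMem_range _ _ hmi
  · rw [polyAct_single hadd hε]
    exact Finsupp.mapDomain_apply hinj _ n

variable [AddMonoid ι] [AddLeftStrictMono ι]

theorem isStableAdd_leadingCoeffs (hC : IsStableAdd (polyAct act) C) (n : ι) :
    IsStableAdd act (leadingCoeffs C n) := fun a b hb => by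
  simpa only [zero_add] using act_mem_leadingCoeffs_add hadd hε hC 0 a hb

theorem leadingCoeffs_le_of_addDivides (hs : ∀ b : B, b ∈ bracketAdd act {b})
    (hC : IsStableAdd (polyAct act) C) {m n : ι} (hmn : AddDivides m n) :
    leadingCoeffs C m ≤ leadingCoeffs C n := by
  obtain ⟨k, rfl⟩ := hmn
  exact fun b hb => (isStableAdd_leadingCoeffs hadd hε hC m).bracketAdd_le
    (Set.singleton_subset_iff.2 hb) (fun a _ hc => act_mem_leadingCoeffs_add hadd hε hC k a hc)
    (hs b)

theorem stablyNoetherianAdd_polyAct [WellFoundedLT ι]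
    (hι : WellQuasiOrdered (AddDivides (ι := ι))) (hN : StablyNoetherianAdd act)
    (hs : ∀ b : B, b ∈ bracketAdd act {b}) : StablyNoetherianAdd (polyAct (ι := ι) act) := by
  rw [stablyNoetherianAdd_iff_wellFoundedGT] at hN ⊢
  have := wellFoundedGT_monotone_of_wellQuasiOrdered (P := StableAddSubgroup act) hι
  let L (C : StableAddSubgroup (polyAct (ι := ι) act)) :
      {f : ι → StableAddSubgroup act // ∀ m n, AddDivides m n → f m ≤ f n} :=
    ⟨fun n => ⟨leadingCoeffs C.1 n, isStableAdd_leadingCoeffs hadd hε C.2 n⟩,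
      fun _ _ => leadingCoeffs_le_of_addDivides hadd hε hs C.2⟩
  have strictMono_L : StrictMono L := fun C D hCD =>
    lt_of_le_not_ge (leadingCoeffs_mono hCD.le)
      fun hDC => hCD.not_ge (le_of_leadingCoeffs_le hCD.le hDC)
  exact strictMono_L.wellFoundedGT

end LeadingCoeffs

theorem stmt15_general {ι A B : Type*} [AddMonoid ι] [LinearOrder ι] [WellFoundedLT ι]
    [AddLeftStrictMono ι] [Infinite ι] (hι : WellQuasiOrdered (AddDivides (ι := ι)))
    [Zero A] [AddCommGroup B] (act : A → B → B)
    (hadd : ∀ (a : A) (b₁ b₂ : B), act a (b₁ + b₂) = act a b₁ + act a b₂)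
    (hε : ∀ b : B, act (0 : A) b = 0) :
    StablyNoetherianAdd (polyAct (ι := ι) act) ↔
      (StablyNoetherianAdd act ∧ ∀ b : B, b ∈ bracketAdd act {b}) :=
  ⟨fun h => ⟨h.of_polyAct, h.mem_bracketAdd_singleton hadd⟩,
    fun ⟨hN, hs⟩ => stablyNoetherianAdd_polyAct hadd hε hι hN hs⟩

/-- Let `B` be an abelian group with operators in a set `A` with
zero element (acting as `0`), and consider the polynomial group
`B[x] = B[x; id, 0]` as a group with operators in `A[x]` via
`(∑ aᵢ xⁱ)(∑ bⱼ xʲ) = ∑ (aᵢ bⱼ) x^{i+j}`.  Then `B[x]` is stably Noetherian if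
and only if `B` is stably Noetherian and the action of `A` on `B` is weakly
s-unital. -/
theorem stmt15 {A B : Type*} [Zero A] [AddCommGroup B] (act : A → B → B)
    (hadd : ∀ (a : A) (b₁ b₂ : B), act a (b₁ + b₂) = act a b₁ + act a b₂)
    (hε : ∀ b : B, act (0 : A) b = 0) :
    StablyNoetherianAdd (fun (α : ℕ →₀ A) (β : ℕ →₀ B) =>
        α.sum fun i a => β.sum fun j b => Finsupp.single (i + j) (act a b)) ↔
      (StablyNoetherianAdd act ∧ ∀ b : B, b ∈ bracketAdd act {b}) :=
  stmt15_general wellQuasiOrdered_addDivides act hadd hε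
end
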